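/- arXiv:2201.11590 — 2 statements merged into one kernel-verified Lean document; each statement's English description precedes it below -/
import Mathlib

section
/- Let a ∈ ℝ, c > 0, and Ψ > 0 be real constants. The function U : (0, ∞) → ℝ defined by U(Q) = Q·(a − c·(exp(ΨQ) − exp(Ψ))) is a concave function of Q on (0, ∞). -/
open Real

/-! Up to the factor `Q`, the utility is a price `a - c * C(Q)` that is concave and decreasing in
`Q`. For an affine weight `f` and a concave `g`, the combination `p • f x • g x + q • f y • g y`
differs from `(p * f x + q * f y) • (p • g x + q • g y)` by `(p * q) • (f x - f y) • (g x - g y)`,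
which is nonpositive as soon as `f` and `g` vary in opposite directions. Only `f`, not `g`, has to
be nonnegative, so the sign of the price does not matter. -/

section AffineWeight

variable {𝕜 E F : Type*} [CommRing 𝕜] [AddCommGroup E] [Module 𝕜 E] [AddCommGroup F] [Module 𝕜 F]

theorem smul_smul_add_smul_smul_eq {p q : 𝕜} (hpq : p + q = 1) (u v : 𝕜) (z w : F) :
    p • u • z + q • v • w =
      (p * u + q * v) • (p • z + q • w) + (p * q) • (u - v) • (z - w) := by
  obtain rfl : q = 1 - p := eq_sub_of_add_eq' hpq
  module

variable [LinearOrder 𝕜] [IsStrictOrderedRing 𝕜]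
  [LinearOrder F] [IsOrderedAddMonoid F] [IsStrictOrderedModule 𝕜 F]

theorem concaveOn_affineMap_smul_of_antivaryOn {s : Set E} (f : E →ᵃ[𝕜] 𝕜) {g : E → F}
    (hg : ConcaveOn 𝕜 s g) (hf : ∀ x ∈ s, 0 ≤ f x) (hfg : AntivaryOn f g s) :
    ConcaveOn 𝕜 s fun x => f x • g x := by
  refine ⟨hg.1, fun x hx y hy p q hp hq hpq => ?_⟩
  have hf_combo : f (p • x + q • y) = p * f x + q * f y := Convex.combo_affine_apply hpq
  have hf_nonneg : 0 ≤ f (p • x + q • y) := hf _ (hg.1 hx hy hp hq hpq)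
  calc p • f x • g x + q • f y • g y
      = (p * f x + q * f y) • (p • g x + q • g y) + (p * q) • (f x - f y) • (g x - g y) :=
        smul_smul_add_smul_smul_eq hpq _ _ _ _
    _ ≤ (p * f x + q * f y) • (p • g x + q • g y) :=
        add_le_of_nonpos_right <|
          smul_nonpos_of_nonneg_of_nonpos (mul_nonneg hp hq) (hfg.sub_smul_sub_nonpos hy hx)
    _ = f (p • x + q • y) • (p • g x + q • g y) := by rw [hf_combo]
    _ ≤ f (p • x + q • y) • g (p • x + q • y) :=
        smul_le_smul_of_nonneg_left (hg.2 hx hy hp hq hpq) hf_nonneg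

theorem concaveOn_id_smul_of_antitoneOn {s : Set 𝕜} {g : 𝕜 → F} (hg : ConcaveOn 𝕜 s g)
    (hg_anti : AntitoneOn g s) (hs : s ⊆ Set.Ici 0) : ConcaveOn 𝕜 s fun x => x • g x :=
  concaveOn_affineMap_smul_of_antivaryOn (AffineMap.id 𝕜 𝕜) hg hs
    (antivaryOn_id_iff.2 hg_anti).symm

end AffineWeight

/-- The average per-bit cost `C(Q)` of compressing at ratio `Q`, with constant `Ψ`. -/
noncomputable def compressionCost (Ψ Q : ℝ) : ℝ := exp (Ψ * Q) - exp Ψ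

theorem convexOn_compressionCost (Ψ : ℝ) : ConvexOn ℝ Set.univ (compressionCost Ψ) :=
  (convexOn_exp.comp_linearMap (LinearMap.mulLeft ℝ Ψ)).add_const (-exp Ψ)

theorem monotone_compressionCost {Ψ : ℝ} (hΨ : 0 ≤ Ψ) : Monotone (compressionCost Ψ) :=
  fun _ _ h => sub_le_sub_right (exp_le_exp.2 (mul_le_mul_of_nonneg_left h hΨ)) _

/-- For a ∈ ℝ, c > 0, Ψ > 0, the function
`U(Q) = Q·(a − c·(exp(ΨQ) − exp(Ψ)))` is concave on `(0, ∞)`. -/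
theorem U_concave
    (a c Ψ : ℝ) (hc : 0 < c) (hΨ : 0 < Ψ) :
    ConcaveOn ℝ (Set.Ioi (0:ℝ))
      (fun Q : ℝ => Q * (a - c * (Real.exp (Ψ * Q) - Real.exp Ψ))) := by
  have price_concave : ConcaveOn ℝ Set.univ fun Q => a - c * compressionCost Ψ Q :=
    (concaveOn_const a convex_univ).sub ((convexOn_compressionCost Ψ).smul hc.le)
  have price_antitone : Antitone fun Q => a - c * compressionCost Ψ Q :=
    fun _ _ h => sub_le_sub_left
      (mul_le_mul_of_nonneg_left (monotone_compressionCost hΨ.le h) hc.le) a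
  exact concaveOn_id_smul_of_antitoneOn
    (price_concave.subset (Set.subset_univ _) (convex_Ioi 0))
    (price_antitone.antitoneOn _) Set.Ioi_subset_Ici_self
end

section
/- Let T_th, D_f, T₀, f_R, Ψ be positive real constants. The function V : (0, ∞) → ℝ defined by V(Q) = (Q/T₀)·(T_th/D_f − (exp(ΨQ) − exp(Ψ))/f_R) is a concave function of Q on (0, ∞). -/
open Real

/-!
Up to terms affine in `Q`, the function `V` is a negative multiple of `Q * C Q` for the cost
`C Q = exp (Ψ * Q) - exp Ψ`. A product of a nonnegative affine factor and a concave one which vary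
in opposite directions is concave whatever the sign of the concave factor: Jensen's inequality is
only multiplied by the affine factor, and Chebyshev's two-point inequality does the rest.
-/

section AffineMul

variable {𝕜 E F ι : Type*} [CommRing 𝕜] [LinearOrder 𝕜] [IsStrictOrderedRing 𝕜]
  [AddCommGroup E] [Module 𝕜 E]
  [AddCommGroup F] [LinearOrder F] [IsOrderedAddMonoid F] [Module 𝕜 F] [IsStrictOrderedModule 𝕜 F]

theorem weighted_sum_smul_le_of_antivaryOn {s : Set ι} {f : ι → 𝕜} {g : ι → F}
    (hfg : AntivaryOn f g s) {i j : ι} (hi : i ∈ s) (hj : j ∈ s) {a b : 𝕜}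
    (ha : 0 ≤ a) (hb : 0 ≤ b) (hab : a + b = 1) :
    a • (f i • g i) + b • (f j • g j) ≤ (a • f i + b • f j) • (a • g i + b • g j) := by
  have exchange : f i • g i + f j • g j ≤ f i • g j + f j • g i :=
    hfg.smul_add_smul_le_smul_add_smul hi hj
  calc
    a • (f i • g i) + b • (f j • g j)
        = (a * (a + b)) • (f i • g i) + (b * (a + b)) • (f j • g j) := by
      simp only [hab, mul_one]
    _ = (a * a) • (f i • g i) + (b * b) • (f j • g j)
          + (a * b) • (f i • g i + f j • g j) := by module
    _ ≤ (a * a) • (f i • g i) + (b * b) • (f j • g j)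
          + (a * b) • (f i • g j + f j • g i) := by gcongr
    _ = (a • f i + b • f j) • (a • g i + b • g j) := by
      simp only [smul_eq_mul]
      module

theorem concaveOn_affineMap_smul {s : Set E} (f : E →ᵃ[𝕜] 𝕜) {g : E → F}
    (hf : ∀ x ∈ s, 0 ≤ f x) (hg : ConcaveOn 𝕜 s g) (hfg : AntivaryOn f g s) :
    ConcaveOn 𝕜 s fun x ↦ f x • g x := by
  refine ⟨hg.1, fun x hx y hy a b ha hb hab ↦ ?_⟩
  have hf_combo : f (a • x + b • y) = a • f x + b • f y := Convex.combo_affine_apply hab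
  calc
    a • (f x • g x) + b • (f y • g y)
        ≤ (a • f x + b • f y) • (a • g x + b • g y) :=
      weighted_sum_smul_le_of_antivaryOn hfg hx hy ha hb hab
    _ = f (a • x + b • y) • (a • g x + b • g y) := by rw [hf_combo]
    _ ≤ f (a • x + b • y) • g (a • x + b • y) :=
      smul_le_smul_of_nonneg_left (hg.2 hx hy ha hb hab) (hf _ (hg.1 hx hy ha hb hab))

end AffineMul

theorem convexOn_exp_mul_sub_const (Ψ c : ℝ) :
    ConvexOn ℝ Set.univ fun Q ↦ exp (Ψ * Q) - c :=
  (convexOn_exp.comp_linearMap (LinearMap.mulLeft ℝ Ψ)).sub (concaveOn_const c convex_univ)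

theorem monotone_exp_mul_sub_const {Ψ : ℝ} (hΨ : 0 ≤ Ψ) (c : ℝ) :
    Monotone fun Q ↦ exp (Ψ * Q) - c :=
  fun Q Q' hQ ↦ by dsimp only; gcongr

theorem V_concave_general {s : Set ℝ} {C : ℝ → ℝ} {T0 fR : ℝ} (τ : ℝ) (hs : s ⊆ Set.Ici 0)
    (hC : ConvexOn ℝ s C) (hC_mono : MonotoneOn C s) (hT0 : 0 < T0) (hfR : 0 < fR) :
    ConcaveOn ℝ s fun Q ↦ Q / T0 * (τ - C Q / fR) := by
  have hslack : ConcaveOn ℝ s fun Q ↦ τ - C Q / fR := by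
    simp only [div_eq_inv_mul]
    exact (concaveOn_const τ hC.1).sub (hC.smul (inv_nonneg.2 hfR.le))
  have hslack_anti : AntitoneOn (fun Q ↦ τ - C Q / fR) s := fun Q hQ Q' hQ' hle ↦ by
    have := hC_mono hQ hQ' hle
    dsimp only
    gcongr
  have hid_mul : ConcaveOn ℝ s fun Q ↦ Q * (τ - C Q / fR) :=
    concaveOn_affineMap_smul (AffineMap.id ℝ ℝ) hs hslack (monotoneOn_id.antivaryOn hslack_anti)
  simpa only [smul_eq_mul, div_eq_inv_mul, mul_assoc] using hid_mul.smul (inv_nonneg.2 hT0.le)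

/-- For positive constants T_th, D_f, T₀, f_R, Ψ, the function
`V(Q) = (Q/T₀)·(T_th/D_f − (exp(ΨQ) − exp(Ψ))/f_R)` is concave on `(0, ∞)`. -/
theorem V_concave
    (Tth Df T0 fR Ψ : ℝ)
    (hTth : 0 < Tth) (hDf : 0 < Df) (hT0 : 0 < T0) (hfR : 0 < fR) (hΨ : 0 < Ψ) :
    ConcaveOn ℝ (Set.Ioi (0:ℝ))
      (fun Q : ℝ =>
        (Q / T0) * (Tth / Df - (Real.exp (Ψ * Q) - Real.exp Ψ) / fR)) := by
  exact V_concave_general (Tth / Df) Set.Ioi_subset_Ici_self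
    ((convexOn_exp_mul_sub_const Ψ (exp Ψ)).subset (Set.subset_univ _) (convex_Ioi 0))
    ((monotone_exp_mul_sub_const hΨ.le (exp Ψ)).monotoneOn _) hT0 hfR
end
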